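/- Let X be a metric space, n ≥ 2, and let A, B ⊆ X be nonempty finite subsets with A having exactly n elements and B having at most n elements. Let ρ ≥ 0 with d_H(A, B) ≤ ρ, and suppose every two distinct points of A are at distance greater than 2ρ. Then there exists a bijection f : A → B such that dist(a, f(a)) ≤ ρ for every a ∈ A. -/

import Mathlib

/-!
Send each point of `A` to a point of `B` within `ρ`. Two points of `A` with the same image would be
within `2ρ` of each other, so the map is injective, and `B` is too small for it to miss a point.
-/

section

open Metric Set
open scoped NNReal ENNReal

theorem bijOn_of_mapsTo_of_injOn_of_ncard_le {α β : Type*} {f : α → β} {s : Set α} {t : Set β}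
    (hmaps : MapsTo f s t) (hinj : InjOn f s) (ht : t.Finite) (hcard : t.ncard ≤ s.ncard) :
    BijOn f s t := by
  have himage : f '' s = t :=
    eq_of_subset_of_ncard_le hmaps.image_subset (hcard.trans_eq hinj.ncard_image.symm) ht
  exact ⟨hmaps, hinj, himage.ge⟩

section PseudoEMetricSpace

variable {X : Type*} [PseudoEMetricSpace X] {A B : Set X}

theorem injOn_of_isSeparated_of_edist_le {f : X → X} {ρ : ℝ≥0∞} (hsep : IsSeparated (2 * ρ) A)
    (hclose : ∀ a ∈ A, edist a (f a) ≤ ρ) : InjOn f A := by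
  intro a ha a' ha' heq
  refine hsep.eq ha ha' (not_lt.2 ?_)
  calc
    edist a a' ≤ edist a (f a) + edist a' (f a) := edist_triangle_right ..
    _ ≤ ρ + ρ := add_le_add (hclose a ha) (heq ▸ hclose a' ha')
    _ = 2 * ρ := (two_mul ρ).symm

theorem exists_mapsTo_edist_le_of_isCover {ρ : ℝ≥0} (hcover : IsCover ρ A B) :
    ∃ f : X → X, MapsTo f A B ∧ ∀ a ∈ A, edist a (f a) ≤ ρ := by
  have hnear : ∀ a ∈ A, ∃ b ∈ B, edist a b ≤ ρ := fun _ ha ↦ hcover ha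
  choose! f hmaps hclose using hnear
  exact ⟨f, hmaps, hclose⟩

theorem close_enumeration_of_separated_sets_general {ρ : ℝ≥0} (hcover : IsCover ρ A B)
    (hsep : IsSeparated (2 * ρ) A) (hB : B.Finite) (hcard : B.ncard ≤ A.ncard) :
    ∃ f : X → X, BijOn f A B ∧ ∀ a ∈ A, edist a (f a) ≤ ρ := by
  obtain ⟨f, hmaps, hclose⟩ := exists_mapsTo_edist_le_of_isCover hcover
  have hinj : InjOn f A := injOn_of_isSeparated_of_edist_le hsep hclose
  exact ⟨f, bijOn_of_mapsTo_of_injOn_of_ncard_le hmaps hinj hB hcard, hclose⟩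

end PseudoEMetricSpace

section PseudoMetricSpace

variable {X : Type*} [PseudoMetricSpace X] {A B : Set X}

theorem isCover_of_hausdorffDist_le {ρ : ℝ≥0} (hA : Bornology.IsBounded A) (hB : IsCompact B)
    (hBne : B.Nonempty) (hH : hausdorffDist A B ≤ ρ) : IsCover ρ A B := by
  intro a ha
  have hfin : hausdorffEDist A B ≠ ⊤ :=
    hausdorffEDist_ne_top_of_nonempty_of_bounded ⟨a, ha⟩ hBne hA hB.isBounded
  obtain ⟨b, hb, hab⟩ := hB.exists_infDist_eq_dist hBne a
  have hdist : dist a b ≤ ρ := hab ▸ (infDist_le_hausdorffDist_of_mem ha hfin).trans hH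
  exact ⟨b, hb, edist_le_coe.2 hdist⟩

theorem isSeparated_coe_iff_pairwise_lt_dist {ε : ℝ≥0} :
    IsSeparated ε A ↔ A.Pairwise (ε < dist · ·) := by
  simp only [IsSeparated, edist_nndist, ENNReal.coe_lt_coe, ← NNReal.coe_lt_coe, coe_nndist]

end PseudoMetricSpace

end

/-- **Inequality (10).** If `A` has exactly `n` elements, `B` has at most `n` elements,
`d_H(A, B) ≤ ρ`, and any two distinct points of `A` are at distance greater than `2ρ`, then
there is a bijection `f` from `A` onto `B` with `dist a (f a) ≤ ρ` for every `a ∈ A`. -/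
theorem close_enumeration_of_separated_sets
    {X : Type*} [MetricSpace X] (n : ℕ) (hn : 2 ≤ n)
    (A B : Set X) (hAfin : A.Finite) (hBfin : B.Finite)
    (hAne : A.Nonempty) (hBne : B.Nonempty)
    (hAcard : A.ncard = n) (hBcard : B.ncard ≤ n)
    (ρ : ℝ) (hρ : 0 ≤ ρ) (hH : Metric.hausdorffDist A B ≤ ρ)
    (hsep : ∀ a ∈ A, ∀ a' ∈ A, a ≠ a' → 2 * ρ < dist a a') :
    ∃ f : X → X, Set.BijOn f A B ∧ ∀ a ∈ A, dist a (f a) ≤ ρ := by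
  lift ρ to NNReal using hρ
  simpa only [edist_le_coe, ← dist_le_coe] using close_enumeration_of_separated_sets_general
    (isCover_of_hausdorffDist_le hAfin.isBounded hBfin.isCompact hBne hH)
    (mod_cast isSeparated_coe_iff_pairwise_lt_dist (ε := 2 * ρ).2 hsep)
    hBfin (hBcard.trans_eq hAcard.symm)
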